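/- Let n ≥ 1, m ≥ 1, 0 < p < 1, s₁,…,s_m > −1, and set λ = (m−1)(n+1) + ∑_{j=1}^m s_j. If f is harmonic on the open set ℍ^m ⊆ ℝ^{m(n+1)} and ∫_{ℍ^m} |f(z₁,…,z_m)|^p t₁^{s₁}⋯t_m^{s_m} dz₁⋯dz_m < ∞, then the trace Tr f(z) = f(z,…,z) satisfies ∫_ℍ |f(z,…,z)|^p t^λ dx dt < ∞, i.e. Tr f ∈ L^p(ℍ, dm_λ). -/

import Mathlib

/-!
The trace is controlled by a pointwise estimate on boxes centred on the diagonal.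

For a harmonic function of `N` variables and `0 < p < 1`, the Hardy–Littlewood inequality
`|f x|^p r^N ≤ K ∫_{B(x,r)} |f|^p` holds (`rpow_sub_mean_value`). It is deduced from the
corresponding `L¹` inequality (`sub_mean_value`), which comes from a solid mean value property with
weight `(1 - |y|²)₊` (`mean_value`): the weighted average of `f` over the ball of radius `ρ` has zero
`ρ`-derivative, since that derivative is the integral of the divergence of a compactly supported
field. Balls are those of the sup norm on `ι → ℝ`; the weight is supported in the unit one.

Applied on `ℍ^m` at `(z, …, z)` with radius `t / 4`, where `t` is the height of `z`, this bounds
`|Tr f(z)|^p t^λ` by a constant times `t^{λ - m(n+1)} ∫ |f w|^p dw` over the box around `(z, …, z)`.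
Integrate in `z` and exchange the order of integration. For fixed `w`, all heights of components
of `w` are comparable to `t`, so `t^{λ - m(n+1)} = t^{-(n+1) + ∑ s_j}` is at most a constant times
`t₁^{-(n+1)} ∏ t_j^{s_j}` (`weight_le`), while the admissible `z` fill a set of volume at most a
constant times `t₁^{n+1}`. What remains is the integral assumed finite.
-/

open MeasureTheory ENNReal

/-- A real-valued function on `ι → ℝ` is harmonic on an open set `U` if it is `C²` on `U`
and the sum of its unmixed second partial derivatives vanishes identically on `U`. -/
def IsHarmonicOn {ι : Type*} [Fintype ι] [DecidableEq ι]
    (f : (ι → ℝ) → ℝ) (U : Set (ι → ℝ)) : Prop :=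
  ContDiffOn ℝ 2 f U ∧
    ∀ x ∈ U, ∑ i, fderiv ℝ (fun y => fderiv ℝ f y (Pi.single i 1)) x (Pi.single i 1) = 0


open Metric

/-! ### A truncated paraboloid -/

/-- The truncated paraboloid `(1 - |y|²)₊` on `ι → ℝ`, with `|·|` the Euclidean norm. -/
noncomputable def bump {ι : Type*} [Fintype ι] (y : ι → ℝ) : ℝ := max 0 (1 - ∑ i, y i ^ 2)

lemma hasDerivAt_posPart_sq (u : ℝ) :
    HasDerivAt (fun u : ℝ => max 0 u ^ 2) (2 * max 0 u) u := by
  refine hasDerivAt_of_hasDerivAt_of_ne' (x := 0) (g := fun u => 2 * max 0 u) ?_ ?_ ?_ u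
  · intro y hy
    rcases lt_or_gt_of_ne hy with h | h
    · have : (fun u : ℝ => max 0 u ^ 2) =ᶠ[nhds y] fun _ => 0 := by
        filter_upwards [eventually_lt_nhds h] with z hz
        simp [max_eq_left hz.le]
      rw [max_eq_left h.le, mul_zero]
      exact (hasDerivAt_const y (0 : ℝ)).congr_of_eventuallyEq this
    · have : (fun u : ℝ => max 0 u ^ 2) =ᶠ[nhds y] fun u => u ^ 2 := by
        filter_upwards [eventually_gt_nhds h] with z hz
        simp [max_eq_right hz.le]
      rw [max_eq_right h.le]
      simpa using (hasDerivAt_pow 2 y).congr_of_eventuallyEq this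
  · fun_prop
  · fun_prop

section Bump
variable {ι : Type*} [Fintype ι]

lemma bump_nonneg (y : ι → ℝ) : 0 ≤ bump y := le_max_left _ _

lemma bump_le_one (y : ι → ℝ) : bump y ≤ 1 :=
  max_le zero_le_one (by linarith [Finset.sum_nonneg (fun i (_ : i ∈ Finset.univ) => sq_nonneg (y i))])

lemma continuous_bump : Continuous (bump : (ι → ℝ) → ℝ) := by
  unfold bump; fun_prop

lemma bump_eq_zero {y : ι → ℝ} (hy : 1 < ‖y‖) : bump y = 0 := by
  have : ∃ i, 1 < ‖y i‖ := by
    by_contra! h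
    exact absurd ((pi_norm_le_iff_of_nonneg zero_le_one).2 h) (not_le.2 hy)
  obtain ⟨i, hi⟩ := this
  have h1 : 1 < y i ^ 2 := by rw [← sq_abs, ← Real.norm_eq_abs]; nlinarith
  have h2 := Finset.single_le_sum (fun j _ => sq_nonneg (y j)) (Finset.mem_univ i)
  exact max_eq_left (by linarith)

lemma contDiff_bump_sq : ContDiff ℝ 1 (fun y : ι → ℝ => bump y ^ 2) := by
  have h : ContDiff ℝ 1 (fun u : ℝ => max 0 u ^ 2) := by
    rw [contDiff_one_iff_deriv]
    refine ⟨fun u => (hasDerivAt_posPart_sq u).differentiableAt, ?_⟩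
    have : deriv (fun u : ℝ => max 0 u ^ 2) = fun u => 2 * max 0 u :=
      funext fun u => (hasDerivAt_posPart_sq u).deriv
    rw [this]; fun_prop
  exact h.comp (g := fun u : ℝ => max 0 u ^ 2) (f := fun y : ι → ℝ => 1 - ∑ i, y i ^ 2) (by fun_prop)

lemma fderiv_bump_sq [DecidableEq ι] (y : ι → ℝ) (i : ι) :
    fderiv ℝ (fun y : ι → ℝ => bump y ^ 2) y (Pi.single i 1) = -4 * (y i * bump y) := by
  have h1 : HasFDerivAt (fun y : ι → ℝ => 1 - ∑ i, y i ^ 2)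
      (- ∑ i, (2 * y i) • (ContinuousLinearMap.proj i : (ι → ℝ) →L[ℝ] ℝ)) y := by
    refine HasFDerivAt.const_sub (HasFDerivAt.fun_sum fun i _ => ?_) 1
    simpa using (ContinuousLinearMap.proj i : (ι → ℝ) →L[ℝ] ℝ).hasFDerivAt.pow 2 (x := y)
  have h2 := (hasDerivAt_posPart_sq (1 - ∑ i, y i ^ 2)).comp_hasFDerivAt y h1
  have h3 : fderiv ℝ (fun y : ι → ℝ => bump y ^ 2) y = _ := h2.fderiv
  rw [h3]
  simp [Pi.single_apply, bump]
  ring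

lemma integral_bump_pos : 0 < ∫ y in closedBall (0 : ι → ℝ) 1, bump y := by
  rw [setIntegral_pos_iff_support_of_nonneg_ae (Filter.Eventually.of_forall bump_nonneg)
    (continuous_bump.continuousOn.integrableOn_compact (isCompact_closedBall _ _))]
  have hopen : IsOpen {y : ι → ℝ | ∑ i, y i ^ 2 < 1} := isOpen_lt (by fun_prop) (by fun_prop)
  refine lt_of_lt_of_le (hopen.measure_pos volume ⟨0, by simp⟩) (measure_mono fun y hy => ?_)
  have hb : bump y ≠ 0 := by
    have : 0 < 1 - ∑ i, y i ^ 2 := by simpa using hy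
    exact (lt_max_of_lt_right this).ne'
  refine ⟨hb, ?_⟩
  by_contra h
  exact hb (bump_eq_zero (by simpa using h))

end Bump

/-! ### The mean value property -/

section MeanValue
variable {ι : Type*} [Fintype ι] [DecidableEq ι] {f : (ι → ℝ) → ℝ} {U : Set (ι → ℝ)}

/-- The divergence theorem for the compactly supported field `(1 - |y|²)₊² ∇f(x + ρy)`, whose
divergence is `-4 (1 - |y|²)₊ ⟨∇f(x + ρy), y⟩` because `f` is harmonic. -/
lemma integral_radial_derivative_eq_zero (hU : IsOpen U) (hf : IsHarmonicOn f U) (x : ι → ℝ) (ρ : ℝ)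
    (hB : ∀ y ∈ closedBall (0 : ι → ℝ) 1, x + ρ • y ∈ U) :
    ∫ y in closedBall (0 : ι → ℝ) 1, fderiv ℝ f (x + ρ • y) y * bump y = 0 := by
  obtain ⟨hC, hlap⟩ := hf
  set A : (ι → ℝ) → (ι → ℝ) := fun y => x + ρ • y with hA
  have hAc : ContDiff ℝ 1 A := by rw [hA]; fun_prop
  have hAd (y : ι → ℝ) : HasFDerivAt A (ρ • ContinuousLinearMap.id ℝ (ι → ℝ)) y :=
    ((hasFDerivAt_id y).const_smul ρ).const_add x
  let D (i : ι) : (ι → ℝ) → ℝ := fun z => fderiv ℝ f z (Pi.single i 1)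
  have hD (i : ι) : ∀ z ∈ U, ContDiffAt ℝ 1 (D i) z := fun z hz =>
    ((hC.contDiffAt (hU.mem_nhds hz)).fderiv_right (m := 1) (by norm_num)).clm_apply contDiffAt_const
  let g (i : ι) : (ι → ℝ) → ℝ := fun y => D i (A y) * bump y ^ 2
  have hout (i : ι) : ∀ y : ι → ℝ, 1 < ‖y‖ → g i =ᶠ[nhds y] fun _ => 0 := by
    intro y hy
    filter_upwards [(isOpen_lt continuous_const continuous_norm).mem_nhds hy] with z hz
    simp [g, bump_eq_zero hz]
  have hg (i : ι) : ContDiff ℝ 1 (g i) := by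
    rw [contDiff_iff_contDiffAt]
    intro y
    rcases le_or_gt ‖y‖ 1 with hy | hy
    · have hy' : A y ∈ U := hB y (by simpa using hy)
      exact ((hD i _ hy').comp y hAc.contDiffAt).mul contDiff_bump_sq.contDiffAt
    · exact contDiffAt_const.congr_of_eventuallyEq (hout i y hy)
  have hsupp (i : ι) : HasCompactSupport (g i) := by
    refine HasCompactSupport.intro (isCompact_closedBall (0 : ι → ℝ) 1) fun y hy => ?_
    exact (hout i y (by simpa using hy)).self_of_nhds
  have hint' (i : ι) : Integrable (fun y => fderiv ℝ (g i) y (Pi.single i 1)) :=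
    (((hg i).continuous_fderiv one_ne_zero).clm_apply
      continuous_const).integrable_of_hasCompactSupport ((hsupp i).fderiv_apply (𝕜 := ℝ) _)
  have hzero (i : ι) : ∫ y, fderiv ℝ (g i) y (Pi.single i 1) = 0 := by
    have := integral_mul_fderiv_eq_neg_fderiv_mul_of_integrable (μ := (volume : Measure (ι → ℝ)))
      (f := fun _ : ι → ℝ => (1 : ℝ)) (g := g i) (v := Pi.single i 1) (by simp)
      (by simpa using hint' i)
      (by simpa using (hg i).continuous.integrable_of_hasCompactSupport (hsupp i))
      (fun _ _ => by fun_prop) (fun y _ => (hg i).differentiable one_ne_zero y)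
    simpa using this
  have hpt (y : ι → ℝ) : ∑ i, fderiv ℝ (g i) y (Pi.single i 1)
      = -4 * (fderiv ℝ f (A y) y * bump y) := by
    rcases le_or_gt ‖y‖ 1 with hy | hy
    · have hy' : A y ∈ U := hB y (by simpa using hy)
      have h1 (i : ι) : fderiv ℝ (g i) y (Pi.single i 1)
          = -4 * bump y * (y i * D i (A y))
            + bump y ^ 2 * ρ * fderiv ℝ (D i) (A y) (Pi.single i 1) := by
        have hd := ((hD i _ hy').differentiableAt one_ne_zero).hasFDerivAt.comp y (hAd y)
        have hb := (contDiff_bump_sq (ι := ι)).differentiable one_ne_zero y |>.hasFDerivAt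
        have h3 : fderiv ℝ (g i) y = _ := (hd.mul hb).fderiv
        rw [h3]
        simp [fderiv_bump_sq]
        ring
      have h2 : fderiv ℝ f (A y) y = ∑ i, y i * D i (A y) := by
        have key (L : (ι → ℝ) →L[ℝ] ℝ) : L y = ∑ i, y i * L (Pi.single i 1) := by
          conv_lhs => rw [pi_eq_sum_univ' y]
          simp only [map_sum, map_smul, smul_eq_mul]
        exact key _
      simp only [h1, Finset.sum_add_distrib, ← Finset.mul_sum]
      rw [h2, hlap _ hy']
      ring
    · rw [bump_eq_zero hy]
      simp [(hout _ y hy).fderiv_eq]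
  have h4 : ∫ y, -4 * (fderiv ℝ f (A y) y * bump y) = 0 := by
    simp_rw [← hpt]
    rw [integral_finsetSum _ fun i _ => hint' i]
    simp [hzero]
  rw [integral_const_mul] at h4
  rw [setIntegral_eq_integral_of_forall_compl_eq_zero]
  · simpa using h4
  · intro y hy
    rw [bump_eq_zero (by simpa using hy), mul_zero]

/-- Weighted solid mean value property of harmonic functions. -/
lemma mean_value (hU : IsOpen U) (hf : IsHarmonicOn f U) (x : ι → ℝ) {r : ℝ} (hr : 0 < r)
    (hB : closedBall x (2 * r) ⊆ U) :
    ∫ y in closedBall (0 : ι → ℝ) 1, f (x + r • y) * bump y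
      = f x * ∫ y in closedBall (0 : ι → ℝ) 1, bump y := by
  have hmem : ∀ ρ ∈ ball (0 : ℝ) (2 * r), ∀ y ∈ closedBall (0 : ι → ℝ) 1,
      x + ρ • y ∈ closedBall x (2 * r) := by
    intro ρ hρ y hy
    simp only [mem_closedBall, dist_self_add_left, norm_smul, mem_ball, dist_zero_right] at *
    nlinarith [norm_nonneg ρ, norm_nonneg y]
  have hC1 : ContinuousOn (fderiv ℝ f) U := hf.1.continuousOn_fderiv_of_isOpen hU (by norm_num)
  obtain ⟨C, hC⟩ := (isCompact_closedBall x (2 * r)).exists_bound_of_continuousOn (hC1.mono hB)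
  have hcont (ρ : ℝ) (hρ : ρ ∈ ball (0 : ℝ) (2 * r)) :
      ContinuousOn (fun y => f (x + ρ • y) * bump y) (closedBall (0 : ι → ℝ) 1) :=
    (hf.1.continuousOn.comp (by fun_prop) fun y hy => hB (hmem ρ hρ y hy)).mul
      continuous_bump.continuousOn
  have hcont' (ρ : ℝ) (hρ : ρ ∈ ball (0 : ℝ) (2 * r)) :
      ContinuousOn (fun y => fderiv ℝ f (x + ρ • y) y * bump y) (closedBall (0 : ι → ℝ) 1) :=
    ((hC1.comp (by fun_prop) fun y hy => hB (hmem ρ hρ y hy)).clm_apply continuousOn_id).mul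
      continuous_bump.continuousOn
  have hder : ∀ ρ ∈ ball (0 : ℝ) (2 * r),
      HasDerivAt (fun ρ => ∫ y in closedBall (0 : ι → ℝ) 1, f (x + ρ • y) * bump y) 0 ρ := by
    intro ρ hρ
    rw [← integral_radial_derivative_eq_zero hU hf x ρ fun y hy => hB (hmem ρ hρ y hy)]
    refine (hasDerivAt_integral_of_dominated_loc_of_deriv_le (bound := fun _ => C)
      (F := fun ρ y => f (x + ρ • y) * bump y)
      (F' := fun ρ y => fderiv ℝ f (x + ρ • y) y * bump y)
      (isOpen_ball.mem_nhds hρ) ?_ ?_ ?_ ?_ ?_ ?_).2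
    · filter_upwards [isOpen_ball.mem_nhds hρ] with a ha
      exact (hcont a ha).aestronglyMeasurable measurableSet_closedBall
    · exact (hcont ρ hρ).integrableOn_compact (isCompact_closedBall _ _)
    · exact (hcont' ρ hρ).aestronglyMeasurable measurableSet_closedBall
    · filter_upwards [ae_restrict_mem measurableSet_closedBall] with y hy a ha
      have h1 := hC _ (hmem a ha y hy)
      have h2 := (fderiv ℝ f (x + a • y)).le_opNorm y
      have h3 : ‖y‖ ≤ 1 := by simpa using hy
      rw [norm_mul, Real.norm_of_nonneg (bump_nonneg y)]
      have h5 : ‖fderiv ℝ f (x + a • y) y‖ ≤ C := by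
        nlinarith [norm_nonneg (fderiv ℝ f (x + a • y))]
      nlinarith [bump_nonneg y, bump_le_one y, norm_nonneg (fderiv ℝ f (x + a • y) y)]
    · exact integrableOn_const (measure_closedBall_lt_top.ne)
    · filter_upwards [ae_restrict_mem measurableSet_closedBall] with y hy a ha
      have hfa := ((hf.1.contDiffAt (hU.mem_nhds (hB (hmem a ha y hy)))).differentiableAt
        two_ne_zero).hasFDerivAt
      have hl : HasDerivAt (fun a : ℝ => x + a • y) y a := by
        simpa using ((hasDerivAt_id a).smul_const y).const_add x
      exact (hfa.comp_hasDerivAt a hl).mul_const _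
  have hconst := isOpen_ball.is_const_of_deriv_eq_zero (𝕜 := ℝ) (convex_ball (0 : ℝ) (2 * r)).isPreconnected
    (fun ρ hρ => (hder ρ hρ).differentiableAt.differentiableWithinAt)
    (fun ρ hρ => (hder ρ hρ).deriv)
    (show r ∈ ball (0 : ℝ) (2 * r) by simp [abs_of_pos hr]; linarith)
    (mem_ball_self (by positivity))
  rw [hconst, ← integral_const_mul]
  simp

/-- Sub-mean value inequality for the modulus of a harmonic function, over sup-norm balls. -/
lemma sub_mean_value (hU : IsOpen U) (hf : IsHarmonicOn f U) (x : ι → ℝ) {r : ℝ} (hr : 0 < r)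
    (hB : closedBall x (2 * r) ⊆ U) :
    |f x| * ((∫ y in closedBall (0 : ι → ℝ) 1, bump y) * r ^ Fintype.card ι)
      ≤ ∫ y in closedBall x r, |f y| := by
  have hsub : closedBall x r ⊆ U := (closedBall_subset_closedBall (by linarith)).trans hB
  have hm := mean_value hU hf x hr hB
  have hscale : ∫ y in closedBall (0 : ι → ℝ) 1, |f (x + r • y)|
      = (r ^ Fintype.card ι)⁻¹ * ∫ y in closedBall x r, |f y| := by
    have h1 := Measure.setIntegral_comp_smul (volume : Measure (ι → ℝ))
      (fun y => |f (x + y)|) (closedBall (0 : ι → ℝ) 1) hr.ne'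
    rw [smul_unitClosedBall_of_nonneg hr.le] at h1
    rw [h1, Module.finrank_pi, abs_of_pos (by positivity), smul_eq_mul]
    congr 1
    have h2 := (measurePreserving_add_left (volume : Measure (ι → ℝ)) x).setIntegral_preimage_emb
      (measurableEmbedding_addLeft x) (fun y => |f y|) (closedBall x r)
    rw [← h2]
    simp
  have habs : |f x| * (∫ y in closedBall (0 : ι → ℝ) 1, bump y)
      ≤ ∫ y in closedBall (0 : ι → ℝ) 1, |f (x + r • y)| := by
    have hmem : ∀ y ∈ closedBall (0 : ι → ℝ) 1, x + r • y ∈ U := by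
      intro y hy
      refine hsub ?_
      simp only [mem_closedBall, dist_self_add_left, norm_smul, dist_zero_right,
        Real.norm_of_nonneg hr.le] at *
      nlinarith
    have hc : ContinuousOn (fun y => f (x + r • y)) (closedBall (0 : ι → ℝ) 1) :=
      hf.1.continuousOn.comp (by fun_prop) hmem
    rw [← abs_of_pos (integral_bump_pos (ι := ι)), ← abs_mul, ← hm]
    refine abs_integral_le_integral_abs.trans (integral_mono_of_nonneg ?_ ?_ ?_)
    · exact Filter.Eventually.of_forall fun y => abs_nonneg _
    · exact (hc.abs).integrableOn_compact (isCompact_closedBall _ _)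
    · refine Filter.Eventually.of_forall fun y => ?_
      simp only [abs_mul, abs_of_nonneg (bump_nonneg y)]
      nlinarith [abs_nonneg (f (x + r • y)), bump_le_one y]
  rw [hscale] at habs
  have hpos : 0 < r ^ Fintype.card ι := by positivity
  rw [← mul_assoc]
  calc _ ≤ ((r ^ Fintype.card ι)⁻¹ * ∫ y in closedBall x r, |f y|) * r ^ Fintype.card ι := by gcongr
    _ = _ := by field_simp

end MeanValue

/-! ### The Hardy–Littlewood inequality for exponents below one -/

section HardyLittlewood
variable {ι : Type*} [Fintype ι] [DecidableEq ι]

/-- The Hardy–Littlewood inequality for `p < 1`: although `|f|^p` need not be subharmonic, it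
satisfies the sub-mean value inequality up to a constant. The proof maximises
`d(y)^{N/p} |f y|` over the ball, where `d` is the distance to the boundary sphere, and applies the
`L¹` inequality at the maximum point. -/
lemma rpow_sub_mean_value [Nonempty ι] {p : ℝ} (hp0 : 0 < p) (hp1 : p < 1) :
    ∃ K : ℝ, 0 < K ∧ ∀ (f : (ι → ℝ) → ℝ) (U : Set (ι → ℝ)), IsOpen U → IsHarmonicOn f U →
      ∀ (x : ι → ℝ) (r : ℝ), 0 < r → closedBall x r ⊆ U →
        |f x| ^ p * r ^ Fintype.card ι ≤ K * ∫ y in closedBall x r, |f y| ^ p := by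
  set c : ℝ := ∫ y in closedBall (0 : ι → ℝ) 1, bump y with hc
  have hc0 : 0 < c := integral_bump_pos
  set N := Fintype.card ι with hN
  have hN0 : (0 : ℝ) < N := by exact_mod_cast Fintype.card_pos
  set a : ℝ := N / p with ha
  have ha0 : 0 < a := by positivity
  have hpow {t : ℝ} (ht : 0 ≤ t) : (t ^ a) ^ p = t ^ N := by
    rw [← Real.rpow_mul ht, ha, div_mul_cancel₀ _ hp0.ne', Real.rpow_natCast]
  refine ⟨2 ^ a / c, by positivity, fun f U hU hf x r hr hB => ?_⟩
  have hfc : ContinuousOn (fun y => |f y|) (closedBall x r) := (hf.1.continuousOn.mono hB).abs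
  have hfp : ContinuousOn (fun y => |f y| ^ p) (closedBall x r) :=
    hfc.rpow_const fun _ _ => Or.inr hp0.le
  have hfpi : IntegrableOn (fun y => |f y| ^ p) (closedBall x r) :=
    hfp.integrableOn_compact (isCompact_closedBall _ _)
  have hd : ContinuousOn (fun y => (r - dist y x) ^ a * |f y|) (closedBall x r) :=
    (ContinuousOn.rpow_const (by fun_prop) fun _ _ => Or.inr ha0.le).mul hfc
  obtain ⟨y₀, hy₀, hmax⟩ := (isCompact_closedBall x r).exists_isMaxOn
    ⟨x, mem_closedBall_self hr.le⟩ hd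
  set S := (r - dist y₀ x) ^ a * |f y₀| with hS
  set A := ∫ y in closedBall x r, |f y| ^ p with hA
  have hA0 : 0 ≤ A := integral_nonneg fun y => by positivity
  have hd₀ : 0 ≤ r - dist y₀ x := by simpa using hy₀
  have hS0 : 0 ≤ S := by positivity
  have hSx : r ^ a * |f x| ≤ S := by
    simpa using hmax (mem_closedBall_self hr.le)
  have hSxp : |f x| ^ p * r ^ N ≤ S ^ p := by
    have := Real.rpow_le_rpow (by positivity) hSx hp0.le
    rwa [Real.mul_rpow (by positivity) (by positivity), hpow hr.le, mul_comm] at this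
  refine hSxp.trans ?_
  rcases hS0.eq_or_lt with h0 | hSpos
  · rw [← h0, Real.zero_rpow hp0.ne']; positivity
  have hd₁ : 0 < r - dist y₀ x := by
    refine hd₀.lt_of_ne fun h => ?_
    rw [hS, ← h, Real.zero_rpow ha0.ne', zero_mul] at hSpos
    exact hSpos.false
  obtain ⟨ρ, hρ⟩ : ∃ ρ, r - dist y₀ x = 2 * ρ := ⟨(r - dist y₀ x) / 2, by ring⟩
  have hρ0 : 0 < ρ := by linarith
  have hball : closedBall y₀ (2 * ρ) ⊆ closedBall x r :=
    closedBall_subset_closedBall' (by linarith)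
  have hball' : closedBall y₀ ρ ⊆ closedBall x r :=
    (closedBall_subset_closedBall (by linarith)).trans hball
  set T := S / ρ ^ a with hT
  have hQ : 0 < ρ ^ a := by positivity
  have hT0 : 0 < T := by positivity
  have hbound : ∀ w ∈ closedBall y₀ ρ, |f w| ≤ T := by
    intro w hw
    have h1 : (r - dist w x) ^ a * |f w| ≤ S := hmax (hball' hw)
    have h2 : ρ ≤ r - dist w x := by
      have := dist_triangle w y₀ x
      have := mem_closedBall.1 hw
      linarith
    rw [hT, le_div_iff₀ hQ]
    calc |f w| * ρ ^ a ≤ |f w| * (r - dist w x) ^ a := by gcongr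
      _ ≤ S := by rwa [mul_comm]
  have hstep : ∫ w in closedBall y₀ ρ, |f w| ≤ T ^ (1 - p) * A := by
    calc ∫ w in closedBall y₀ ρ, |f w| ≤ ∫ w in closedBall y₀ ρ, T ^ (1 - p) * |f w| ^ p := by
          refine setIntegral_mono_on ?_ ?_ measurableSet_closedBall fun w hw => ?_
          · exact (hfc.mono hball').integrableOn_compact (isCompact_closedBall _ _)
          · exact (hfpi.mono_set hball').const_mul _
          · calc |f w| = |f w| ^ (1 - p) * |f w| ^ p := by
                  rw [← Real.rpow_add_of_nonneg (abs_nonneg _) (by linarith) hp0.le]; simp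
              _ ≤ _ := by
                  gcongr
                  exact hbound w hw
      _ = T ^ (1 - p) * ∫ w in closedBall y₀ ρ, |f w| ^ p := integral_const_mul _ _
      _ ≤ _ := by
        gcongr
        exact setIntegral_mono_set hfpi (Filter.Eventually.of_forall fun y => by positivity)
          hball'.eventuallyLE
  have hmain := (sub_mean_value hU hf y₀ hρ0 (hball.trans hB)).trans hstep
  have hSeq : |f y₀| = T / 2 ^ a := by
    rw [hT, hS, hρ, Real.mul_rpow zero_le_two hρ0.le]
    field_simp
  have hSp : S ^ p = T ^ p * ρ ^ N := by
    rw [← hpow hρ0.le, ← Real.mul_rpow hT0.le hQ.le, hT, div_mul_cancel₀ _ hQ.ne']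
  have hTT : T = T ^ (1 - p) * T ^ p := by
    rw [← Real.rpow_add hT0]; simp
  rw [hSeq] at hmain
  have h5 : T ^ (1 - p) * (T ^ p * ρ ^ N * c / 2 ^ a) ≤ T ^ (1 - p) * A := by
    calc _ = (T ^ (1 - p) * T ^ p) / 2 ^ a * (c * ρ ^ N) := by ring
      _ ≤ _ := by rwa [← hTT]
  have h6 := le_of_mul_le_mul_left h5 (by positivity)
  rw [hSp]
  rw [div_le_iff₀ (by positivity)] at h6
  rw [div_mul_eq_mul_div, le_div_iff₀ hc0]
  linarith

end HardyLittlewood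

/-! ### Comparison of weights and the trace estimate -/

lemma rpow_le_of_comparable {t τ : ℝ} (s : ℝ) (ht : 0 < t) (hτ : 0 < τ) (h1 : t ≤ 2 * τ)
    (h2 : τ ≤ 2 * t) : t ^ s ≤ 2 ^ |s| * τ ^ s := by
  rcases le_total 0 s with hs | hs
  · rw [abs_of_nonneg hs, ← Real.mul_rpow zero_le_two hτ.le]
    exact Real.rpow_le_rpow ht.le h1 hs
  · have h3 : (2 : ℝ) ^ (-s) * τ ^ s = (τ / 2) ^ s := by
      rw [Real.div_rpow hτ.le zero_le_two, Real.rpow_neg zero_le_two]; field_simp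
    rw [abs_of_nonpos hs, h3]
    exact Real.rpow_le_rpow_of_nonpos (by positivity) (by linarith) hs

/-- If the heights `τ j` all lie within `t / 4` of `t`, they are comparable to `t`, and so are the
weights. The exponent on the left is `λ - m(n+1)`: that of `dm_λ` after division by the
order of magnitude `t^{m(n+1)}` of the volume of a box around a diagonal point. -/
lemma weight_le {m : ℕ} (n : ℕ) (s : Fin m → ℝ) (j₀ : Fin m) {t : ℝ} (ht : 0 < t) {τ : Fin m → ℝ}
    (hτ : ∀ j, |τ j - t| ≤ t / 4) :
    t ^ (∑ j, s j - (n + 1 : ℕ)) ≤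
      (2 ^ (n + 1) * ∏ j, (2 : ℝ) ^ |s j|) * ((τ j₀ ^ (n + 1))⁻¹ * ∏ j, τ j ^ s j) := by
  have hτ' (j : Fin m) : 0 < τ j ∧ t ≤ 2 * τ j ∧ τ j ≤ 2 * t := by
    have := abs_le.1 (hτ j)
    refine ⟨?_, ?_, ?_⟩ <;> linarith
  have h1 : (t ^ (n + 1))⁻¹ ≤ 2 ^ (n + 1) * (τ j₀ ^ (n + 1))⁻¹ := by
    obtain ⟨h, -, h'⟩ := hτ' j₀
    rw [← div_eq_mul_inv, le_div_iff₀ (by positivity), inv_mul_le_iff₀ (by positivity), ← mul_pow]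
    exact pow_le_pow_left₀ h.le (by linarith) _
  have h2 : ∏ j, t ^ s j ≤ (∏ j, (2 : ℝ) ^ |s j|) * ∏ j, τ j ^ s j := by
    rw [← Finset.prod_mul_distrib]
    exact Finset.prod_le_prod (fun j _ => by positivity) fun j _ =>
      rpow_le_of_comparable _ ht (hτ' j).1 (hτ' j).2.1 (hτ' j).2.2
  have h3 : t ^ (∑ j, s j - (n + 1 : ℕ)) = (t ^ (n + 1))⁻¹ * ∏ j, t ^ s j := by
    rw [Real.rpow_sub ht, Real.rpow_natCast, Real.rpow_sum_of_pos ht]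
    field_simp
  rw [h3]
  calc _ ≤ (2 ^ (n + 1) * (τ j₀ ^ (n + 1))⁻¹) * ((∏ j, (2 : ℝ) ^ |s j|) * ∏ j, τ j ^ s j) :=
        mul_le_mul h1 h2 (Finset.prod_nonneg fun j _ => by positivity)
          (by have := (hτ' j₀).1; positivity)
    _ = _ := by ring

/-- if `f` is harmonic on `ℍ^m ⊆ ℝ^{m(n+1)}` and belongs to the weighted Bergman
space `A^p_{s⃗}(ℍ^m)` with `0 < p < 1`, `s_j > −1`, then its trace `z ↦ f(z,…,z)` lies in
`L^p(ℍ, dm_λ)` where `λ = (m−1)(n+1) + ∑ s_j`.  Points of `ℍ ⊆ ℝ^{n+1}` are indexed by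
`Fin (n+1)`, the last coordinate being the height `t > 0`; points of `ℍ^m` are indexed by
`Fin m × Fin (n+1)`. -/
theorem trace_harmonic_bergman_pLtOne
    (n m : ℕ) (hn : 1 ≤ n) (hm : 1 ≤ m) (p : ℝ) (hp0 : 0 < p) (hp1 : p < 1)
    (s : Fin m → ℝ) (hs : ∀ j, -1 < s j)
    (f : ((Fin m × Fin (n + 1)) → ℝ) → ℝ)
    (hharm : IsHarmonicOn f {z | ∀ i : Fin m, 0 < z (i, Fin.last n)})
    (hint : ∫⁻ z in {z : (Fin m × Fin (n + 1)) → ℝ | ∀ i : Fin m, 0 < z (i, Fin.last n)},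
        ENNReal.ofReal (|f z| ^ p * ∏ j : Fin m, z (j, Fin.last n) ^ s j) < ⊤) :
    ∫⁻ z in {z : Fin (n + 1) → ℝ | 0 < z (Fin.last n)},
        ENNReal.ofReal (|f (fun q => z q.2)| ^ p *
          z (Fin.last n) ^ (((m : ℝ) - 1) * ((n : ℝ) + 1) + ∑ j : Fin m, s j)) < ⊤ := by
  set ℓ := Fin.last n with hℓ
  set U : Set ((Fin m × Fin (n + 1)) → ℝ) := {z | ∀ i : Fin m, 0 < z (i, ℓ)} with hUdef
  set H : Set (Fin (n + 1) → ℝ) := {z | 0 < z ℓ} with hHdef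
  have hU : IsOpen U := by
    rw [hUdef, Set.ofPred_forall]
    exact isOpen_iInter_of_finite fun i => isOpen_lt continuous_const (continuous_apply _)
  have hH : MeasurableSet H := measurableSet_lt measurable_const (measurable_pi_apply _)
  let j₀ : Fin m := ⟨0, hm⟩
  have : Nonempty (Fin m × Fin (n + 1)) := ⟨(j₀, 0)⟩
  obtain ⟨K, hK0, hK⟩ := rpow_sub_mean_value (ι := Fin m × Fin (n + 1)) hp0 hp1
  set M : ℕ := m * (n + 1) with hM
  have hcard : Fintype.card (Fin m × Fin (n + 1)) = M := by simp [hM]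
  set e : ℝ := ∑ j, s j - (n + 1 : ℕ) with he
  set Φ : ((Fin m × Fin (n + 1)) → ℝ) → ℝ≥0∞ :=
    U.indicator fun w => ENNReal.ofReal (|f w| ^ p) with hΦ
  have hfc : ContinuousOn f U := hharm.1.continuousOn
  have hΦm : Measurable Φ := by
    have hc : ContinuousOn (fun w => ENNReal.ofReal (|f w| ^ p)) U :=
      ENNReal.continuous_ofReal.comp_continuousOn
        (hfc.abs.rpow_const fun _ _ => Or.inr hp0.le)
    have := hc.measurable_piecewise (g := (0 : ((Fin m × Fin (n + 1)) → ℝ) → ℝ≥0∞))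
      continuousOn_const hU.measurableSet
    rwa [Set.piecewise_eq_indicator] at this
  -- The set of pairs `(z, w)` with `w` in the box of radius `t / 4` about `(z, …, z)`.
  set B : Set ((Fin (n + 1) → ℝ) × ((Fin m × Fin (n + 1)) → ℝ)) :=
    {q | 0 < q.1 ℓ ∧ ∀ i, |q.2 i - q.1 i.2| ≤ q.1 ℓ / 4} with hB
  have hBm : MeasurableSet B := by
    refine (measurableSet_lt (g := fun q : (Fin (n + 1) → ℝ) × ((Fin m × Fin (n + 1)) → ℝ) => q.1 ℓ)
      measurable_const (by fun_prop)).inter ?_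
    show MeasurableSet {q : (Fin (n + 1) → ℝ) × ((Fin m × Fin (n + 1)) → ℝ) |
      ∀ i, |q.2 i - q.1 i.2| ≤ q.1 ℓ / 4}
    rw [Set.ofPred_forall]
    exact MeasurableSet.iInter fun i => (isClosed_le (by fun_prop) (by fun_prop)).measurableSet
  set G : (Fin (n + 1) → ℝ) → ((Fin m × Fin (n + 1)) → ℝ) → ℝ≥0∞ := fun z w =>
    B.indicator (fun q => ENNReal.ofReal (q.1 ℓ ^ e) * Φ q.2) (z, w) with hG
  have hGm : Measurable (Function.uncurry G) := by
    have : Measurable fun q : (Fin (n + 1) → ℝ) × ((Fin m × Fin (n + 1)) → ℝ) =>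
        ENNReal.ofReal (q.1 ℓ ^ e) * Φ q.2 := by fun_prop
    exact this.indicator hBm
  have hlocal : ∀ z ∈ H, ENNReal.ofReal (|f (fun q => z q.2)| ^ p *
      z ℓ ^ (((m : ℝ) - 1) * ((n : ℝ) + 1) + ∑ j : Fin m, s j))
        ≤ ENNReal.ofReal (K * 4 ^ M) * ∫⁻ w, G z w := by
    intro z hz
    have ht : 0 < z ℓ := hz
    have hmem : ∀ w, w ∈ closedBall (fun q : Fin m × Fin (n + 1) => z q.2) (z ℓ / 4) ↔ (z, w) ∈ B := by
      intro w
      rw [mem_closedBall, dist_pi_le_iff (by positivity)]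
      simp [hB, ht, Real.dist_eq]
    have hsub : closedBall (fun q : Fin m × Fin (n + 1) => z q.2) (z ℓ / 4) ⊆ U := by
      intro w hw i
      have := abs_le.1 (((hmem w).1 hw).2 (i, ℓ))
      simp only at this
      linarith
    have h1 := hK f U hU hharm _ (z ℓ / 4) (by positivity) hsub
    rw [hcard] at h1
    have hexp : z ℓ ^ (((m : ℝ) - 1) * ((n : ℝ) + 1) + ∑ j : Fin m, s j)
        = z ℓ ^ M * z ℓ ^ e := by
      rw [← Real.rpow_natCast, ← Real.rpow_add ht, he, hM]
      congr 1
      push_cast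
      ring
    have h2 : |f (fun q => z q.2)| ^ p *
        z ℓ ^ (((m : ℝ) - 1) * ((n : ℝ) + 1) + ∑ j : Fin m, s j)
          ≤ K * 4 ^ M * (z ℓ ^ e *
            ∫ w in closedBall (fun q : Fin m × Fin (n + 1) => z q.2) (z ℓ / 4), |f w| ^ p) := by
      rw [hexp]
      calc _ = (|f (fun q => z q.2)| ^ p * (z ℓ / 4) ^ M) * (4 ^ M * z ℓ ^ e) := by
            rw [div_pow]; field_simp
        _ ≤ (K * ∫ w in closedBall (fun q : Fin m × Fin (n + 1) => z q.2) (z ℓ / 4), |f w| ^ p)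
              * (4 ^ M * z ℓ ^ e) := by gcongr
        _ = _ := by ring
    refine (ENNReal.ofReal_le_ofReal h2).trans ?_
    rw [ENNReal.ofReal_mul (by positivity)]
    gcongr
    rw [ENNReal.ofReal_mul (by positivity), ofReal_integral_eq_lintegral_ofReal
      (((hfc.mono hsub).abs.rpow_const fun _ _ => Or.inr hp0.le).integrableOn_compact
        (isCompact_closedBall _ _)) (Filter.Eventually.of_forall fun w => by positivity),
      ← lintegral_const_mul' _ _ ENNReal.ofReal_ne_top, ← lintegral_indicator measurableSet_closedBall]
    refine lintegral_mono fun w => ?_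
    refine Set.indicator_le' (fun w hw => ?_) (fun w _ => zero_le) w
    have hw' := (hmem w).1 hw
    simp [hG, Set.indicator_of_mem hw', hΦ, Set.indicator_of_mem (hsub hw)]
  set C : ℝ := (2 ^ (n + 1) * ∏ j, (2 : ℝ) ^ |s j|) * 2 ^ (n + 1) with hC
  have hinner : ∀ w, ∫⁻ z, G z w ≤ ENNReal.ofReal C *
      U.indicator (fun w => ENNReal.ofReal (|f w| ^ p * ∏ j : Fin m, w (j, ℓ) ^ s j)) w := by
    intro w
    by_cases hw : w ∈ U
    swap
    · have : ∀ z, G z w = 0 := fun z => by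
        have hΦw : Φ w = 0 := Set.indicator_of_notMem hw _
        simp only [hG, Set.indicator_apply, hΦw, mul_zero, ite_self]
      simp [this]
    have hτ : 0 < w (j₀, ℓ) := hw j₀
    set P : ℝ := ∏ j : Fin m, w (j, ℓ) ^ s j with hP
    have hP0 : 0 ≤ P := Finset.prod_nonneg fun j _ => Real.rpow_nonneg (hw j).le _
    set D : ℝ := (2 ^ (n + 1) * ∏ j, (2 : ℝ) ^ |s j|) * ((w (j₀, ℓ) ^ (n + 1))⁻¹ * P) with hD
    have hprod : 0 ≤ ∏ j, (2 : ℝ) ^ |s j| := Finset.prod_nonneg fun j _ => by positivity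
    have hD0 : 0 ≤ D := by positivity
    have hle : ∀ z, G z w ≤ (closedBall (fun i => w (j₀, i)) (w (j₀, ℓ))).indicator
        (fun _ => ENNReal.ofReal (D * |f w| ^ p)) z := by
      intro z
      by_cases hzw : (z, w) ∈ B
      swap
      · simp [hG, Set.indicator_of_notMem hzw]
      have ht : 0 < z ℓ := hzw.1
      have hzball : z ∈ closedBall (fun i => w (j₀, i)) (w (j₀, ℓ)) := by
        rw [mem_closedBall, dist_pi_le_iff hτ.le]
        intro i
        have h1 := hzw.2 (j₀, i)
        have h2 := abs_le.1 (hzw.2 (j₀, ℓ))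
        simp only at h1 h2
        rw [Real.dist_eq, abs_sub_comm]
        linarith
      rw [Set.indicator_of_mem hzball]
      simp only [hG, Set.indicator_of_mem hzw, hΦ, Set.indicator_of_mem hw]
      rw [← ENNReal.ofReal_mul (by positivity)]
      refine ENNReal.ofReal_le_ofReal ?_
      gcongr
      exact weight_le n s j₀ ht (τ := fun j => w (j, ℓ)) fun j => hzw.2 (j, ℓ)
    refine (lintegral_mono hle).trans ?_
    rw [lintegral_indicator_const measurableSet_closedBall, Real.volume_pi_closedBall _ hτ.le,
      Set.indicator_of_mem hw, ← ENNReal.ofReal_mul (by positivity),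
      ← ENNReal.ofReal_mul (by positivity)]
    refine ENNReal.ofReal_le_ofReal (le_of_eq ?_)
    rw [Fintype.card_fin, hD, hC, mul_pow, ← hP]
    field_simp
  calc _ ≤ ∫⁻ z in H, ENNReal.ofReal (K * 4 ^ M) * ∫⁻ w, G z w :=
        setLIntegral_mono' hH hlocal
    _ ≤ ∫⁻ z, ENNReal.ofReal (K * 4 ^ M) * ∫⁻ w, G z w := setLIntegral_le_lintegral _ _
    _ = ENNReal.ofReal (K * 4 ^ M) * ∫⁻ w, ∫⁻ z, G z w := by
        rw [lintegral_const_mul' _ _ ENNReal.ofReal_ne_top,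
          lintegral_lintegral_swap hGm.aemeasurable]
    _ ≤ ENNReal.ofReal (K * 4 ^ M) * ∫⁻ w, ENNReal.ofReal C *
        U.indicator (fun w => ENNReal.ofReal (|f w| ^ p * ∏ j : Fin m, w (j, ℓ) ^ s j)) w := by
        gcongr with w
        exact hinner w
    _ < ⊤ := by
        rw [lintegral_const_mul' _ _ ENNReal.ofReal_ne_top, lintegral_indicator hU.measurableSet]
        exact ENNReal.mul_lt_top ENNReal.ofReal_lt_top
          (ENNReal.mul_lt_top ENNReal.ofReal_lt_top hint)
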